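/- Let q ≥ 3 be an integer, ε ∈ {0, 1/2, 1, 3/2, 2}, and d, a integers with d ≥ 2 and 0 ≤ a ≤ d−1. Then: (a) if ε ≥ 1, then |λ_1^a| = max{ |λ_r^a| : 1 ≤ r ≤ d }; (b) if ε ≤ 1, then |λ_d^a| = max{ |λ_r^a| : 1 ≤ r ≤ d }; (c) if d − a is even or ε ≥ 1, then λ_1^a = min{ λ_r^a : 1 ≤ r ≤ d }; (d) if d − a is odd and ε ≤ 1, then λ_d^a = min{ λ_r^a : 1 ≤ r ≤ d }. -/

import Mathlib

/-- The Gaussian binomial coefficient `C_q(n,k)` for a real `q > 1` and integers `n, k`: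
`∏_{i=1}^{k} (q^{n−i+1} − 1)/(q^i − 1)` if `0 ≤ k ≤ n`, and `0` otherwise. -/
noncomputable def gaussBinom (q : ℝ) (n k : ℤ) : ℝ :=
  if 0 ≤ k ∧ k ≤ n then
    ∏ i ∈ Finset.Icc (1 : ℤ) k, (q ^ (n - i + 1) - 1) / (q ^ i - 1)
  else 0

/-- `binom(m,2) = m(m−1)/2`, as a real number. -/
noncomputable def binom2 (m : ℤ) : ℝ := ((m * (m - 1) : ℤ) : ℝ) / 2

/-- `A(r,s,a) := C_q(d−r,s) q^{binom(d−r−s,2) + (d−r−s)ε} C_q(r−1, a−s) q^{binom(r−a+s,2)}`. -/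
noncomputable def Aval (q ε : ℝ) (d r s a : ℤ) : ℝ :=
  gaussBinom q (d - r) s * q ^ (binom2 (d - r - s) + ((d - r - s : ℤ) : ℝ) * ε) *
    gaussBinom q (r - 1) (a - s) * q ^ binom2 (r - a + s)

/-- `λ_r^a := (−1)^{r+a} Σ_{s=max(a−r+1,0)}^{min(a,d−r)} (−1)^s A(r,s,a)`. -/
noncomputable def lamVal (q ε : ℝ) (d r a : ℤ) : ℝ :=
  (-1 : ℝ) ^ (r + a) *
    ∑ s ∈ Finset.Icc (max (a - r + 1) 0) (min a (d - r)),
      (-1 : ℝ) ^ s * Aval q ε d r s a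

/-!
By the `q`-binomial theorem the alternating sum defining `λ_r^a` is a coefficient of a product of
linear factors,
`λ_r^a = -[X^a] ∏_{i=0}^{d-r-1} (X + q^(ε+i)) ∏_{i=1}^{r-1} (X - q^i)`.
Replacing each constant term by a number at least as large as its absolute value yields a product
whose coefficients bound the absolute values of the original ones. For `r = 1` the constant terms
are `q^ε, …, q^(ε+d-2)`; they bound those of `λ_r^a` as soon as `q ≤ q^(ε+d-r)`. For `r = d` they
are, up to sign, `q, …, q^(d-1)`; they bound those of `λ_r^a` as soon as `q^ε ≤ q^r`.
The signs of `λ_1^a` and `λ_d^a` are `-1` and `(-1)^(d+a)`, which turns these bounds into minima.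
-/

open Finset Polynomial

lemma pow_eq_pow_mul_zpow_sub {G : Type*} [GroupWithZero G] {x : G} (hx : x ≠ 0) (n k : ℕ) :
    x ^ n = x ^ k * x ^ ((n : ℤ) - k) := by
  rw [← zpow_natCast, ← zpow_natCast, ← zpow_add₀ hx, add_sub_cancel]

section GaussBinom

variable {q : ℝ}

lemma gaussBinom_zero_right {n : ℤ} (hn : 0 ≤ n) : gaussBinom q n 0 = 1 := by
  simp [gaussBinom, hn]

lemma gaussBinom_of_lt {n k : ℤ} (h : n < k) : gaussBinom q n k = 0 :=
  if_neg fun hk => h.not_ge hk.2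

lemma gaussBinom_succ_right (n : ℤ) (k : ℕ) :
    gaussBinom q n (k + 1) =
      gaussBinom q n k * ((q ^ (n - k) - 1) / (q ^ (k + 1) - 1)) := by
  rcases lt_trichotomy (k : ℤ) n with h | rfl | h
  · have hnotMem : (k : ℤ) + 1 ∉ Icc (1 : ℤ) k := by simp
    rw [gaussBinom, gaussBinom, if_pos (by omega), if_pos (by omega),
      ← insert_Icc_right_eq_Icc_add_one (by omega), prod_insert hnotMem, mul_comm,
      show n - (k + 1) + 1 = n - (k : ℤ) by ring]
    norm_cast
  · simp [gaussBinom_of_lt (lt_add_one (k : ℤ))]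
  · rw [gaussBinom_of_lt h, gaussBinom_of_lt (h.trans (lt_add_one _)), zero_mul]

lemma gaussBinom_succ_succ_eq_mul (n k : ℕ) :
    gaussBinom q (n + 1) (k + 1) =
      gaussBinom q n k * ((q ^ (n + 1) - 1) / (q ^ (k + 1) - 1)) := by
  induction k with
  | zero =>
    have h := gaussBinom_succ_right (q := q) (n + 1) 0
    rw [Nat.cast_zero, gaussBinom_zero_right (by omega), sub_zero] at h
    rw [Nat.cast_zero, h, gaussBinom_zero_right (by omega)]
    norm_cast
  | succ k ih =>
    have hn := gaussBinom_succ_right (q := q) n k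
    have hn' := gaussBinom_succ_right (q := q) (n + 1) (k + 1)
    push_cast at hn' ⊢
    rw [hn', ih, hn, add_sub_add_right_eq_sub]
    ring

lemma gaussBinom_succ_succ (hq : 1 < q) (n k : ℕ) :
    gaussBinom q (n + 1) (k + 1) =
      gaussBinom q n k + q ^ (k + 1) * gaussBinom q n (k + 1) := by
  have hden : q ^ (k + 1) - 1 ≠ 0 := (sub_pos.2 (one_lt_pow₀ hq k.succ_ne_zero)).ne'
  have hpow : q ^ (n + 1) = q ^ (k + 1) * q ^ ((n : ℤ) - k) := by
    simpa using pow_eq_pow_mul_zpow_sub (show q ≠ 0 by positivity) (n + 1) (k + 1)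
  rw [gaussBinom_succ_succ_eq_mul, gaussBinom_succ_right, hpow]
  field_simp
  ring

end GaussBinom

lemma rpow_binom2_add_one {q : ℝ} (hq : 0 < q) (n : ℤ) :
    q ^ binom2 (n + 1) = q ^ binom2 n * q ^ n := by
  rw [← Real.rpow_intCast, ← Real.rpow_add hq]
  congr 1
  simp only [binom2]
  push_cast
  ring

section QPochhammer

variable {R : Type*} [CommSemiring R]

/-- The homogenised `q`-Pochhammer symbol `∏_{i<n} (X + z qⁱ)`, the generating polynomial of the
Gaussian binomial coefficients. -/
noncomputable def qPochhammer (q z : R) (n : ℕ) : R[X] :=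
  ∏ i ∈ range n, (X + C (z * q ^ i))

lemma qPochhammer_zero (q z : R) : qPochhammer q z 0 = 1 :=
  prod_range_zero _

lemma qPochhammer_succ (q z : R) (n : ℕ) :
    qPochhammer q z (n + 1) = qPochhammer q z n * (X + C (z * q ^ n)) :=
  prod_range_succ _ _

lemma qPochhammer_add (q z : R) (m n : ℕ) :
    qPochhammer q z (m + n) = qPochhammer q z m * qPochhammer q (z * q ^ m) n := by
  simp only [qPochhammer, prod_range_add, pow_add, mul_assoc]

lemma coeff_qPochhammer {q z : ℝ} (hq : 1 < q) (hz : z ≠ 0) (n k : ℕ) :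
    (qPochhammer q z n).coeff k =
      gaussBinom q n k * q ^ binom2 (n - k) * z ^ ((n : ℤ) - k) := by
  have hq₀ : 0 < q := by positivity
  induction n generalizing k with
  | zero =>
    rcases k with _ | k
    · simp [qPochhammer_zero, gaussBinom_zero_right, binom2]
    · rw [qPochhammer_zero, coeff_one, if_neg k.succ_ne_zero, gaussBinom_of_lt (by omega)]
      simp
  | succ n ih =>
    rcases k with _ | k
    · rw [qPochhammer_succ, mul_coeff_zero, ih, Nat.cast_zero, sub_zero, sub_zero,
        gaussBinom_zero_right (by omega), gaussBinom_zero_right (by omega), Nat.cast_succ,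
        rpow_binom2_add_one hq₀, zpow_add_one₀ hz, coeff_add, coeff_X_zero, coeff_C_zero,
        zpow_natCast q]
      ring
    · have hsub : (n : ℤ) - k = n - (k + 1) + 1 := by ring
      have hqn : q ^ n = q ^ (k + 1) * q ^ ((n : ℤ) - (k + 1)) := by
        exact_mod_cast pow_eq_pow_mul_zpow_sub hq₀.ne' n (k + 1)
      rw [qPochhammer_succ, mul_add, coeff_add, coeff_mul_X, coeff_mul_C, ih, ih]
      push_cast
      rw [gaussBinom_succ_succ hq, add_sub_add_right_eq_sub, hsub, rpow_binom2_add_one hq₀,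
        zpow_add_one₀ hz, hqn]
      ring

lemma coeff_qPochhammer_neg {q z : ℝ} (hq : 1 < q) (hz : z ≠ 0) (n k : ℕ) :
    (qPochhammer q (-z) n).coeff k = (-1) ^ ((n : ℤ) - k) * (qPochhammer q z n).coeff k := by
  rw [coeff_qPochhammer hq hz, coeff_qPochhammer hq (neg_ne_zero.2 hz), neg_eq_neg_one_mul z,
    mul_zpow]
  ring

end QPochhammer

section Majorant

/-- `P` is a majorant of `p` when its coefficients bound those of `p` in absolute value. -/
def IsMajorant {R : Type*} [Ring R] [Lattice R] (P p : R[X]) : Prop :=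
  ∀ k, |p.coeff k| ≤ P.coeff k

section Ring

variable {R : Type*} [Ring R] [LinearOrder R] [IsStrictOrderedRing R]

lemma isMajorant_one : IsMajorant (1 : R[X]) 1 := fun k => by
  rw [coeff_one]
  split_ifs <;> simp

lemma isMajorant_X_add_C {a b : R} (h : |a| ≤ b) : IsMajorant (X + C b) (X + C a)
  | 0 => by simpa using h
  | k + 1 => by
    simp only [coeff_add, coeff_X, coeff_C_succ, add_zero]
    split_ifs <;> simp

lemma IsMajorant.mul {P p Q r : R[X]} (hp : IsMajorant P p) (hr : IsMajorant Q r) :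
    IsMajorant (P * Q) (p * r) := fun k => by
  rw [coeff_mul, coeff_mul]
  refine (abs_sum_le_sum_abs _ _).trans (sum_le_sum fun i _ => ?_)
  rw [abs_mul]
  exact mul_le_mul (hp _) (hr _) (abs_nonneg _) ((abs_nonneg _).trans (hp _))

end Ring

section CommRing

variable {R : Type*} [CommRing R] [LinearOrder R] [IsStrictOrderedRing R]

lemma IsMajorant.prod {ι : Type*} {s : Finset ι} {P p : ι → R[X]}
    (h : ∀ i ∈ s, IsMajorant (P i) (p i)) : IsMajorant (∏ i ∈ s, P i) (∏ i ∈ s, p i) := by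
  induction s using Finset.cons_induction with
  | empty => exact isMajorant_one
  | cons i s hi ih =>
    rw [forall_mem_cons] at h
    rw [prod_cons, prod_cons]
    exact h.1.mul (ih h.2)

lemma isMajorant_qPochhammer {q z w : R} (hq : 0 ≤ q) (h : |w| ≤ z) (n : ℕ) :
    IsMajorant (qPochhammer q z n) (qPochhammer q w n) :=
  .prod fun i _ => isMajorant_X_add_C <| by
    rw [abs_mul, abs_of_nonneg (pow_nonneg hq i)]
    exact mul_le_mul_of_nonneg_right h (pow_nonneg hq i)

lemma isMajorant_qPochhammer_add {q z v w : R} {m : ℕ} (hq : 0 ≤ q) (hv : |v| ≤ z)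
    (hw : |w| ≤ z * q ^ m) (n : ℕ) :
    IsMajorant (qPochhammer q z (m + n)) (qPochhammer q v m * qPochhammer q w n) := by
  rw [qPochhammer_add]
  exact (isMajorant_qPochhammer hq hv m).mul (isMajorant_qPochhammer hq hw n)

end CommRing

end Majorant

section Eigenvalues

lemma lamVal_eq_sum_antidiagonal (q ε : ℝ) (d r : ℤ) (a : ℕ) :
    lamVal q ε d r a = (-1) ^ (r + a) * ∑ p ∈ antidiagonal a, (-1) ^ p.1 * Aval q ε d r p.1 a := by
  rw [lamVal]
  congr 1
  refine sum_of_injOn (fun s => (s.toNat, (a - s).toNat)) ?_ ?_ ?_ ?_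
  · intro s hs s' hs' h
    simp only [coe_Icc, Set.mem_Icc, Prod.mk.injEq] at hs hs' h
    omega
  · intro s hs
    simp only [coe_Icc, Set.mem_Icc, mem_coe, HasAntidiagonal.mem_antidiagonal] at hs ⊢
    omega
  · rintro ⟨s, w⟩ hp hs
    have hout : d - r < s ∨ r - 1 < a - s := by
      by_contra! hin
      rw [HasAntidiagonal.mem_antidiagonal] at hp
      refine hs ⟨s, ?_, ?_⟩
      · simp only [coe_Icc, Set.mem_Icc]
        omega
      · ext
        · simp
        · simp only; omega
    rcases hout with h | h <;> simp [Aval, gaussBinom_of_lt h]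
  · intro s hs
    rw [mem_Icc] at hs
    lift s to ℕ using by omega
    simp

variable {q : ℝ}

lemma Aval_eq_coeff_mul_coeff (hq : 1 < q) (ε : ℝ) (m j s w : ℕ) :
    Aval q ε (m + j + 1) (j + 1) s (s + w) =
      (qPochhammer q (q ^ ε) m).coeff s * (qPochhammer q q j).coeff w := by
  have hq₀ : 0 < q := by positivity
  have hd : (m : ℤ) + j + 1 - (j + 1) = m := by ring
  have hr : (j : ℤ) + 1 - (s + w) + s = j - w + 1 := by ring
  have hε : q ^ (((m - s : ℤ) : ℝ) * ε) = (q ^ ε) ^ ((m : ℤ) - s) := by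
    rw [mul_comm, Real.rpow_mul_intCast hq₀.le]
  rw [coeff_qPochhammer hq (Real.rpow_pos_of_pos hq₀ ε).ne', coeff_qPochhammer hq hq₀.ne', Aval,
    hd, hr, add_sub_cancel_right, add_sub_cancel_left, Real.rpow_add hq₀, hε,
    rpow_binom2_add_one hq₀]
  ring

lemma lamVal_eq_neg_coeff (hq : 1 < q) (ε : ℝ) (m j a : ℕ) :
    lamVal q ε (m + j + 1) (j + 1) a =
      -(qPochhammer q (q ^ ε) m * qPochhammer q (-q) j).coeff a := by
  rw [lamVal_eq_sum_antidiagonal, coeff_mul, mul_sum, ← sum_neg_distrib]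
  refine sum_congr rfl fun ⟨s, w⟩ hp => ?_
  obtain rfl := HasAntidiagonal.mem_antidiagonal.1 hp
  have hsign : (-1 : ℝ) ^ ((j : ℤ) + 1 + (s + w)) * (-1) ^ s = -(-1) ^ ((j : ℤ) - w) := by
    have hexp : (j : ℤ) + 1 + (s + w) + s = (j - w) + (2 * (s + w) + 1) := by ring
    rw [← zpow_natCast, ← zpow_add₀ (by simp), hexp, zpow_add₀ (by simp),
      (odd_two_mul_add_one _).neg_one_zpow, mul_neg_one]
  push_cast
  rw [Aval_eq_coeff_mul_coeff hq, coeff_qPochhammer_neg hq (by positivity), ← mul_assoc, hsign]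
  ring

lemma lamVal_one (hq : 1 < q) (ε : ℝ) (n a : ℕ) :
    lamVal q ε (n + 1) 1 a = -(qPochhammer q (q ^ ε) n).coeff a := by
  simpa [qPochhammer_zero] using lamVal_eq_neg_coeff hq ε n 0 a

lemma lamVal_self (hq : 1 < q) (ε : ℝ) (n a : ℕ) :
    lamVal q ε (n + 1) (n + 1) a = (-1) ^ ((n : ℤ) + 1 + a) * (qPochhammer q q n).coeff a := by
  have hexp : (n : ℤ) + 1 + a = (n - a) + (2 * a + 1) := by ring
  have h := lamVal_eq_neg_coeff hq ε 0 n a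
  rw [qPochhammer_zero, one_mul, coeff_qPochhammer_neg hq (by positivity), Nat.cast_zero,
    zero_add] at h
  rw [h, hexp, zpow_add₀ (by simp), (odd_two_mul_add_one _).neg_one_zpow]
  ring

variable {ε : ℝ} {d r a : ℤ}

lemma abs_lamVal_le_neg_lamVal_one (hq : 1 < q) (ha : 0 ≤ a) (hr : 1 ≤ r) (hrd : r ≤ d)
    (h : 1 ≤ ε + (d - r)) : |lamVal q ε d r a| ≤ -lamVal q ε d 1 a := by
  have hq₀ : 0 < q := by positivity
  lift a to ℕ using ha
  obtain ⟨j, rfl⟩ : ∃ j : ℕ, r = j + 1 := ⟨(r - 1).toNat, by omega⟩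
  obtain ⟨m, rfl⟩ : ∃ m : ℕ, d = m + j + 1 := ⟨(d - (j + 1)).toNat, by omega⟩
  have hqm : |-q| ≤ q ^ ε * q ^ m := by
    rw [abs_neg, abs_of_pos hq₀, ← Real.rpow_add_natCast hq₀.ne']
    refine Real.self_le_rpow_of_one_le hq.le ?_
    push_cast at h
    linarith
  have hone := lamVal_one hq ε (m + j) a
  push_cast at hone
  rw [lamVal_eq_neg_coeff hq, hone, abs_neg, neg_neg]
  exact isMajorant_qPochhammer_add hq₀.le (abs_of_pos (Real.rpow_pos_of_pos hq₀ ε)).le hqm j a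

lemma abs_lamVal_le_neg_one_zpow_mul_lamVal_self (hq : 1 < q) (ha : 0 ≤ a) (hr : 1 ≤ r)
    (hrd : r ≤ d) (h : ε ≤ r) : |lamVal q ε d r a| ≤ (-1) ^ (d + a) * lamVal q ε d d a := by
  have hq₀ : 0 < q := by positivity
  lift a to ℕ using ha
  obtain ⟨j, rfl⟩ : ∃ j : ℕ, r = j + 1 := ⟨(r - 1).toNat, by omega⟩
  obtain ⟨m, rfl⟩ : ∃ m : ℕ, d = m + j + 1 := ⟨(d - (j + 1)).toNat, by omega⟩
  have hqj : |q ^ ε| ≤ q * q ^ j := by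
    rw [abs_of_pos (Real.rpow_pos_of_pos hq₀ ε), ← pow_succ', ← Real.rpow_natCast]
    exact Real.rpow_le_rpow_of_exponent_le hq.le (by exact_mod_cast h)
  have hself := lamVal_self hq ε (m + j) a
  push_cast at hself
  rw [lamVal_eq_neg_coeff hq, hself, abs_neg, ← mul_assoc, ← mul_zpow, neg_one_mul, neg_neg,
    one_zpow, one_mul, mul_comm, add_comm m]
  exact isMajorant_qPochhammer_add hq₀.le (by rw [abs_neg, abs_of_pos hq₀]) hqj m a

lemma lamVal_one_le_lamVal (hq : 1 < q) (ha : 0 ≤ a) (hr : 1 ≤ r) (hrd : r ≤ d)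
    (h : 1 ≤ ε + (d - r)) : lamVal q ε d 1 a ≤ lamVal q ε d r a :=
  neg_le_neg_iff.1 ((neg_le_abs _).trans (abs_lamVal_le_neg_lamVal_one hq ha hr hrd h))

lemma lamVal_one_le_lamVal_of_even (hq : 1 < q) (hε : 0 ≤ ε) (ha : 0 ≤ a) (had : a ≤ d - 1)
    (heven : Even (d - a)) (hr : 1 ≤ r) (hrd : r ≤ d) : lamVal q ε d 1 a ≤ lamVal q ε d r a := by
  rcases hrd.lt_or_eq with hlt | rfl
  · have hlt' : (r : ℝ) + 1 ≤ d := by exact_mod_cast hlt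
    exact lamVal_one_le_lamVal hq ha hr hrd (by linarith)
  rcases le_total 1 ε with hε₁ | hε₁
  · exact lamVal_one_le_lamVal hq ha hr le_rfl (by linarith)
  have hr' : (1 : ℝ) + 1 ≤ r := by
    obtain ⟨c, hc⟩ := heven
    exact_mod_cast (by omega : 1 + 1 ≤ r)
  have hone : lamVal q ε r 1 a ≤ 0 := neg_nonneg.1 <| (abs_nonneg _).trans <|
    abs_lamVal_le_neg_lamVal_one hq ha le_rfl hr (by push_cast; linarith)
  have hself : 0 ≤ (-1) ^ (r + a) * lamVal q ε r r a := (abs_nonneg _).trans <|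
    abs_lamVal_le_neg_one_zpow_mul_lamVal_self hq ha hr le_rfl (by linarith)
  rw [(Int.even_add.2 (Int.even_sub.1 heven)).neg_one_zpow, one_mul] at hself
  exact hone.trans hself

lemma abs_lamVal_le_abs_lamVal_self (hq : 1 < q) (ha : 0 ≤ a) (hr : 1 ≤ r) (hrd : r ≤ d)
    (h : ε ≤ r) : |lamVal q ε d r a| ≤ |lamVal q ε d d a| := by
  refine (abs_lamVal_le_neg_one_zpow_mul_lamVal_self hq ha hr hrd h).trans
    ((le_abs_self _).trans_eq ?_)
  rw [abs_mul, abs_zpow, abs_neg, abs_one, one_zpow, one_mul]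

lemma lamVal_self_le_lamVal_of_odd (hq : 1 < q) (ha : 0 ≤ a) (hodd : Odd (d - a)) (hr : 1 ≤ r)
    (hrd : r ≤ d) (h : ε ≤ r) : lamVal q ε d d a ≤ lamVal q ε d r a := by
  have hself := abs_lamVal_le_neg_one_zpow_mul_lamVal_self hq ha hr hrd h
  rw [(Int.odd_add.2 (Int.odd_sub.1 hodd)).neg_one_zpow, neg_one_mul] at hself
  exact neg_le_neg_iff.1 ((neg_le_abs _).trans hself)

end Eigenvalues

theorem stmt12_general {q : ℝ} (hq : 1 < q) (ε : ℝ) {d a : ℤ} (ha : 0 ≤ a) (had : a ≤ d - 1) :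
    (1 ≤ ε → ∀ r : ℤ, 1 ≤ r → r ≤ d → |lamVal q ε d r a| ≤ |lamVal q ε d 1 a|) ∧
    (ε ≤ 1 → ∀ r : ℤ, 1 ≤ r → r ≤ d → |lamVal q ε d r a| ≤ |lamVal q ε d d a|) ∧
    ((Even (d - a) ∧ 0 ≤ ε ∨ 1 ≤ ε) → ∀ r : ℤ, 1 ≤ r → r ≤ d →
      lamVal q ε d 1 a ≤ lamVal q ε d r a) ∧
    ((Odd (d - a) ∧ ε ≤ 1) → ∀ r : ℤ, 1 ≤ r → r ≤ d →
      lamVal q ε d d a ≤ lamVal q ε d r a) := by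
  have hone {r : ℤ} (hrd : r ≤ d) (h : 1 ≤ ε) : 1 ≤ ε + (d - r) :=
    le_add_of_le_of_nonneg h (sub_nonneg.2 (by exact_mod_cast hrd))
  have hself {r : ℤ} (hr : 1 ≤ r) (h : ε ≤ 1) : ε ≤ r := h.trans (by exact_mod_cast hr)
  refine ⟨fun h r hr hrd => ?_, fun h r hr hrd => ?_, ?_, fun h r hr hrd => ?_⟩
  · exact (abs_lamVal_le_neg_lamVal_one hq ha hr hrd (hone hrd h)).trans (neg_le_abs _)
  · exact abs_lamVal_le_abs_lamVal_self hq ha hr hrd (hself hr h)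
  · rintro (⟨heven, hε⟩ | h) r hr hrd
    · exact lamVal_one_le_lamVal_of_even hq hε ha had heven hr hrd
    · exact lamVal_one_le_lamVal hq ha hr hrd (hone hrd h)
  · exact lamVal_self_le_lamVal_of_odd hq ha h.1 hr hrd (hself hr h.2)

theorem stmt12 (q : ℕ) (hq : 3 ≤ q) (ε : ℝ)
    (hε : ε ∈ ({0, 1/2, 1, 3/2, 2} : Set ℝ))
    (d a : ℤ) (hd : 2 ≤ d) (ha : 0 ≤ a) (had : a ≤ d - 1) :
    (1 ≤ ε → ∀ r : ℤ, 1 ≤ r → r ≤ d →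
      |lamVal (q : ℝ) ε d r a| ≤ |lamVal (q : ℝ) ε d 1 a|) ∧
    (ε ≤ 1 → ∀ r : ℤ, 1 ≤ r → r ≤ d →
      |lamVal (q : ℝ) ε d r a| ≤ |lamVal (q : ℝ) ε d d a|) ∧
    ((Even (d - a) ∨ 1 ≤ ε) → ∀ r : ℤ, 1 ≤ r → r ≤ d →
      lamVal (q : ℝ) ε d 1 a ≤ lamVal (q : ℝ) ε d r a) ∧
    ((Odd (d - a) ∧ ε ≤ 1) → ∀ r : ℤ, 1 ≤ r → r ≤ d →
      lamVal (q : ℝ) ε d d a ≤ lamVal (q : ℝ) ε d r a) := by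
  have hε₀ : 0 ≤ ε := by rcases hε with rfl | rfl | rfl | rfl | rfl <;> norm_num
  simpa only [hε₀, and_true] using stmt12_general (by exact_mod_cast (by omega : 1 < q)) ε ha had
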